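/- arXiv:2512.18222 — 3 statements merged into one kernel-verified Lean document; each statement's English description precedes it below -/
import Mathlib

section
/- Let ε > 0, p ∈ ℝ³, and let μ be a symmetric probability measure on ℝ³ supported in the closed ball of radius ε around the origin. Let S : ℝ³ → ℝ be twice continuously differentiable with S ≥ 0 everywhere and ‖D²S(x)‖ ≤ H for all x in the closed ball of radius ε around p. Let δ₁, …, δ₇ be the seven stencil points {0, ±ε·e₁, ±ε·e₂, ±ε·e₃}. Then |log(1 + ∫ S(p + δ) dμ(δ)) − log(1 + (1/7) · ∑_{m=1}^{7} S(p + δ_m))| ≤ (1/2 + 3/7) · H · ε². -/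
open MeasureTheory Metric

/-- The symmetric 7-point stencil `{0, ±ε e₁, ±ε e₂, ±ε e₃}` in ℝ³. -/
noncomputable def stencil (ε : ℝ) : Fin 7 → EuclideanSpace ℝ (Fin 3) :=
  ![0, ε • EuclideanSpace.single 0 1, -(ε • EuclideanSpace.single 0 1),
    ε • EuclideanSpace.single 1 1, -(ε • EuclideanSpace.single 1 1),
    ε • EuclideanSpace.single 2 1, -(ε • EuclideanSpace.single 2 1)]

lemma taylor_aux {E : Type*} [NormedAddCommGroup E] [NormedSpace ℝ E]
    (S : E → ℝ) (hS : ContDiff ℝ 2 S) (p : E) (ε H : ℝ) (hε : 0 < ε)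
    (hH : ∀ x ∈ closedBall p ε, ‖iteratedFDeriv ℝ 2 S x‖ ≤ H) (v : E) (hv : ‖v‖ ≤ ε) :
    |S (p + v) - S p - fderiv ℝ S p v| ≤ H * ε ^ 2 / 2 := by
  have hH0 : 0 ≤ H := (norm_nonneg _).trans (hH p (mem_closedBall_self hε.le))
  have hd : Differentiable ℝ S := hS.differentiable (by norm_num)
  have hd1 : ContDiff ℝ 1 (fderiv ℝ S) := hS.fderiv_right (by norm_num)
  have hd2 : Differentiable ℝ (fderiv ℝ S) := hd1.differentiable (by norm_num)
  have hlip : ∀ x ∈ closedBall p ε, ‖fderiv ℝ S x - fderiv ℝ S p‖ ≤ H * ‖x - p‖ := by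
    intro x hx
    refine (convex_closedBall p ε).norm_image_sub_le_of_norm_fderiv_le (𝕜 := ℝ)
      (fun y _ => hd2 y) (fun y hy => ?_) (mem_closedBall_self hε.le) hx
    have := hH y hy
    rwa [← norm_iteratedFDeriv_fderiv (n := 1), norm_iteratedFDeriv_one] at this
  let g : ℝ → ℝ := fun t => S (p + t • v) - S p - t * fderiv ℝ S p v
  have hg : ∀ t, HasDerivAt g (fderiv ℝ S (p + t • v) v - fderiv ℝ S p v) t := by
    intro t
    have h1 : HasDerivAt (fun t : ℝ => p + t • v) v t := by
      simpa using ((hasDerivAt_id t).smul_const v).const_add p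
    have h2 := (hd (p + t • v)).hasFDerivAt.comp_hasDerivAt t h1
    have h3 : HasDerivAt (fun t : ℝ => t * fderiv ℝ S p v) (fderiv ℝ S p v) t := by
      simpa using (hasDerivAt_id t).mul_const (fderiv ℝ S p v)
    exact (h2.sub_const (S p)).sub h3
  have hB : ∀ t : ℝ, HasDerivAt (fun t : ℝ => H * ‖v‖ ^ 2 * t ^ 2 / 2) (H * ‖v‖ ^ 2 * t) t := by
    intro t
    have h := ((hasDerivAt_pow 2 t).const_mul (H * ‖v‖ ^ 2)).div_const 2
    have e : H * ‖v‖ ^ 2 * (((2 : ℕ) : ℝ) * t ^ (2 - 1)) / 2 = H * ‖v‖ ^ 2 * t := by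
      norm_num
      ring
    rwa [e] at h
  have key := image_norm_le_of_norm_deriv_right_le_deriv_boundary (f := g)
    (f' := fun t => fderiv ℝ S (p + t • v) v - fderiv ℝ S p v) (a := 0) (b := 1)
    (B := fun t => H * ‖v‖ ^ 2 * t ^ 2 / 2) (B' := fun t => H * ‖v‖ ^ 2 * t)
    (fun t _ => (hg t).continuousAt.continuousWithinAt)
    (fun t _ => (hg t).hasDerivWithinAt) (by simp [g])
    hB
    (fun t ht => by
      have hn : ‖t • v‖ = t * ‖v‖ := by rw [norm_smul, Real.norm_of_nonneg ht.1]
      have hx : p + t • v ∈ closedBall p ε := by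
        rw [mem_closedBall, dist_eq_norm, add_sub_cancel_left, hn]
        nlinarith [norm_nonneg v, ht.1, ht.2]
      have h := hlip _ hx
      rw [add_sub_cancel_left, hn] at h
      calc ‖fderiv ℝ S (p + t • v) v - fderiv ℝ S p v‖
          = ‖(fderiv ℝ S (p + t • v) - fderiv ℝ S p) v‖ := by simp
        _ ≤ ‖fderiv ℝ S (p + t • v) - fderiv ℝ S p‖ * ‖v‖ := ContinuousLinearMap.le_opNorm _ _
        _ ≤ (H * (t * ‖v‖)) * ‖v‖ := by gcongr
        _ = H * ‖v‖ ^ 2 * t := by ring)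
    (x := 1) (by simp)
  simp only [g, one_smul, one_mul, Real.norm_eq_abs] at key
  refine key.trans ?_
  have : ‖v‖ ^ 2 ≤ ε ^ 2 := by gcongr
  nlinarith

lemma log_aux (a b : ℝ) (ha : 0 ≤ a) (hb : 0 ≤ b) :
    Real.log (1 + a) - Real.log (1 + b) ≤ |a - b| := by
  rw [← Real.log_div (by positivity) (by positivity)]
  refine (Real.log_le_sub_one_of_pos (by positivity)).trans ?_
  have : (1 + a) / (1 + b) - 1 = (a - b) / (1 + b) := by field_simp; ring
  rw [this]
  refine (div_le_div_of_nonneg_right (le_abs_self _) (by positivity)).trans ?_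
  exact div_le_self (abs_nonneg _) (by linarith)

/-- Quadratic discretization error at the level of the surrogate capacity
`log (1 + ·)`: for a nonnegative `C²` SNR field `S` with Hessian bound `H` on the
ε-ball around `p`, and a symmetric probability kernel supported in the ε-ball,
the surrogate costs built from the continuous and discrete smoothed SNR differ by
at most `(1/2 + 3/7)·H·ε²`. The logarithm is the natural logarithm. -/
theorem stmt_7 (ε : ℝ) (hε : 0 < ε) (p : EuclideanSpace ℝ (Fin 3))
    (μ : Measure (EuclideanSpace ℝ (Fin 3))) [IsProbabilityMeasure μ]
    (hsupp : μ (closedBall (0 : EuclideanSpace ℝ (Fin 3)) ε)ᶜ = 0)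
    (hsymm : μ.map (fun x => -x) = μ)
    (S : EuclideanSpace ℝ (Fin 3) → ℝ) (hS : ContDiff ℝ 2 S)
    (hS0 : ∀ x, 0 ≤ S x) (H : ℝ)
    (hH : ∀ x ∈ closedBall p ε, ‖iteratedFDeriv ℝ 2 S x‖ ≤ H) :
    |Real.log (1 + ∫ δ, S (p + δ) ∂μ) -
        Real.log (1 + (1 / 7 : ℝ) * ∑ m : Fin 7, S (p + stencil ε m))| ≤
      (1 / 2 + 3 / 7) * H * ε ^ 2 := by
  have hT := taylor_aux S hS p ε H hε hH
  set L := fderiv ℝ S p with hL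
  have hae : ∀ᵐ δ ∂μ, ‖δ‖ ≤ ε := by
    have : ∀ᵐ δ ∂μ, δ ∈ closedBall (0 : EuclideanSpace ℝ (Fin 3)) ε := hsupp
    filter_upwards [this] with δ hδ
    simpa using hδ
  have hSc : Continuous S := hS.continuous
  have hLi : Integrable (fun δ => L δ) μ := by
    refine Integrable.of_bound L.continuous.aestronglyMeasurable (‖L‖ * ε) ?_
    filter_upwards [hae] with δ hδ
    exact (L.le_opNorm δ).trans (by gcongr)
  have hRi : Integrable (fun δ => S (p + δ) - S p - L δ) μ := by
    refine Integrable.of_bound (by fun_prop) (H * ε ^ 2 / 2) ?_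
    filter_upwards [hae] with δ hδ
    exact hT δ hδ
  have hL0 : ∫ δ, L δ ∂μ = 0 := by
    have h : ∫ δ, L δ ∂μ = ∫ δ, L (-δ) ∂μ := by
      conv_lhs => rw [← hsymm]
      exact integral_map (by fun_prop) (by fun_prop)
    simp only [map_neg, integral_neg] at h
    linarith
  have hI : ∫ δ, S (p + δ) ∂μ - S p = ∫ δ, (S (p + δ) - S p - L δ) ∂μ := by
    have h : ∫ δ, S (p + δ) ∂μ = ∫ δ, ((S (p + δ) - S p - L δ) + (L δ + S p)) ∂μ := by
      congr 1; ext δ; ring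
    have hc : Integrable (fun δ => L δ + S p) μ := hLi.add (integrable_const _)
    rw [h, integral_add hRi hc,
      integral_add hLi (integrable_const _), hL0]
    simp
  have hA : |∫ δ, S (p + δ) ∂μ - S p| ≤ H * ε ^ 2 / 2 := by
    rw [hI]
    have := norm_integral_le_of_norm_le_const (μ := μ)
      (f := fun δ => S (p + δ) - S p - L δ) (C := H * ε ^ 2 / 2)
      (by filter_upwards [hae] with δ hδ using hT δ hδ)
    simpa using this
  have hpair : ∀ i : Fin 3, |S (p + ε • EuclideanSpace.single i 1)
      + S (p + -(ε • EuclideanSpace.single i 1)) - 2 * S p| ≤ H * ε ^ 2 := by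
    intro i
    have hn : ‖ε • (EuclideanSpace.single i 1 : EuclideanSpace ℝ (Fin 3))‖ ≤ ε := by
      simp [norm_smul, abs_of_pos hε]
    have h1 := abs_le.1 (hT _ hn)
    have h2 := abs_le.1 (hT (-(ε • EuclideanSpace.single i 1)) (by rwa [norm_neg]))
    rw [map_neg] at h2
    rw [abs_le]
    constructor <;> linarith [h1.1, h1.2, h2.1, h2.2]
  have hB : |(1 / 7 : ℝ) * ∑ m : Fin 7, S (p + stencil ε m) - S p| ≤ 3 / 7 * H * ε ^ 2 := by
    have hs : ∑ m : Fin 7, S (p + stencil ε m) = S p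
        + (S (p + ε • EuclideanSpace.single 0 1) + S (p + -(ε • EuclideanSpace.single 0 1)))
        + (S (p + ε • EuclideanSpace.single 1 1) + S (p + -(ε • EuclideanSpace.single 1 1)))
        + (S (p + ε • EuclideanSpace.single 2 1) + S (p + -(ε • EuclideanSpace.single 2 1))) := by
      have h0 : S p = S (p + 0) := by rw [add_zero]
      rw [Fin.sum_univ_seven, h0]
      change S (p + 0) + S (p + ε • EuclideanSpace.single 0 1)
        + S (p + -(ε • EuclideanSpace.single 0 1))
        + S (p + ε • EuclideanSpace.single 1 1) + S (p + -(ε • EuclideanSpace.single 1 1))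
        + S (p + ε • EuclideanSpace.single 2 1) + S (p + -(ε • EuclideanSpace.single 2 1)) = _
      ring
    rw [hs]
    have h0 := abs_le.1 (hpair 0)
    have h1 := abs_le.1 (hpair 1)
    have h2 := abs_le.1 (hpair 2)
    rw [abs_le]
    constructor <;> linarith [h0.1, h0.2, h1.1, h1.2, h2.1, h2.2]
  have ha : 0 ≤ ∫ δ, S (p + δ) ∂μ := integral_nonneg fun δ => hS0 _
  have hb : 0 ≤ (1 / 7 : ℝ) * ∑ m : Fin 7, S (p + stencil ε m) :=
    mul_nonneg (by norm_num) (Finset.sum_nonneg fun m _ => hS0 _)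
  generalize (∫ δ, S (p + δ) ∂μ) = a at *
  generalize ((1 / 7 : ℝ) * ∑ m : Fin 7, S (p + stencil ε m)) = b at *
  have hab : |a - b| ≤ (1 / 2 + 3 / 7) * H * ε ^ 2 := by
    rw [abs_le] at hA hB ⊢
    constructor <;> linarith [hA.1, hA.2, hB.1, hB.2]
  have l1 := log_aux a b ha hb
  have l2 := log_aux b a hb ha
  rw [abs_sub_comm b a] at l2
  refine le_trans (abs_le.2 ⟨?_, l1⟩) hab
  linarith
end

section
/- Let n ≥ 1, ε > 0, σ > 0, c ≥ 0, and let f, g : ℝⁿ → ℝ be twice continuously differentiable functions satisfying, for all x ∈ ℝⁿ: 0 ≤ f(x) ≤ F, 0 ≤ g(x) ≤ G, ‖∇f(x)‖ ≤ a₁/ε, ‖D²f(x)‖ ≤ a₂/ε², ‖∇g(x)‖ ≤ b₁/σ, ‖D²g(x)‖ ≤ b₂/σ², where F, G, a₁, a₂, b₁, b₂ ≥ 0. Define h(x) = log(1 + c·f(x)·g(x)) (natural logarithm) and K = c·(F·b₂ + G·a₂ + a₁·b₁) + 2c²·(F²·b₁² + G²·a₁²). Then ‖D²h(x)‖ ≤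 K·(ε⁻² + σ⁻²) for all x, and hence ∇h is Lipschitz continuous on ℝⁿ with Lipschitz constant L_grad = K·(ε⁻² + σ⁻²). -/
theorem aux_norm {E : Type*} [NormedAddCommGroup E] [NormedSpace ℝ E] (f : E → ℝ) (x : E) :
    ‖iteratedFDeriv ℝ 2 f x‖ = ‖fderiv ℝ (fderiv ℝ f) x‖ := by
  rw [← norm_iteratedFDeriv_one, norm_iteratedFDeriv_fderiv]

theorem aux_main {E : Type*} [NormedAddCommGroup E] [NormedSpace ℝ E] (f g : E → ℝ) (c : ℝ)
    (hc : 0 ≤ c) (hf : ContDiff ℝ 2 f) (hg : ContDiff ℝ 2 g)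
    (hf0 : ∀ x, 0 ≤ f x) (hg0 : ∀ x, 0 ≤ g x) (F G p q P Q : ℝ)
    (hfF : ∀ x, f x ≤ F) (hgG : ∀ x, g x ≤ G)
    (hp : ∀ x, ‖fderiv ℝ f x‖ ≤ p) (hq : ∀ x, ‖fderiv ℝ g x‖ ≤ q)
    (hP : ∀ x, ‖fderiv ℝ (fderiv ℝ f) x‖ ≤ P) (hQ : ∀ x, ‖fderiv ℝ (fderiv ℝ g) x‖ ≤ Q) (x : E) :
    ‖fderiv ℝ (fderiv ℝ (fun y => Real.log (1 + c * f y * g y))) x‖ ≤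
      c * (F * Q + G * P + 2 * (p * q)) + c ^ 2 * (F * q + G * p) ^ 2 := by
  have df : ∀ x, HasFDerivAt f (fderiv ℝ f x) x := fun x =>
    (hf.differentiable (by norm_num) x).hasFDerivAt
  have dg : ∀ x, HasFDerivAt g (fderiv ℝ g x) x := fun x =>
    (hg.differentiable (by norm_num) x).hasFDerivAt
  have ddf : HasFDerivAt (fderiv ℝ f) (fderiv ℝ (fderiv ℝ f) x) x :=
    ((hf.fderiv_right (m := 1) (by norm_num)).differentiable (by norm_num) x).hasFDerivAt
  have ddg : HasFDerivAt (fderiv ℝ g) (fderiv ℝ (fderiv ℝ g) x) x :=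
    ((hg.fderiv_right (m := 1) (by norm_num)).differentiable (by norm_num) x).hasFDerivAt
  have pos : ∀ y, 1 ≤ 1 + c * f y * g y := fun y => by
    have := mul_nonneg (mul_nonneg hc (hf0 y)) (hg0 y)
    linarith
  have du : ∀ y, HasFDerivAt (fun y => 1 + c * f y * g y)
      (c • (f y • fderiv ℝ g y + g y • fderiv ℝ f y)) y := fun y => by
    have h := (((df y).const_mul c).mul (dg y)).const_add 1
    refine h.congr_fderiv ?_
    ext v
    simp
    ring
  have dh : fderiv ℝ (fun y => Real.log (1 + c * f y * g y)) = fun y =>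
      (1 + c * f y * g y)⁻¹ • (c • (f y • fderiv ℝ g y + g y • fderiv ℝ f y)) := by
    funext y
    exact ((du y).log (by linarith [pos y])).fderiv
  have ds : HasFDerivAt (fun y => c • (f y • fderiv ℝ g y + g y • fderiv ℝ f y)) _ x :=
    (((df x).smul ddg).add ((dg x).smul ddf)).const_smul c
  have di := (hasDerivAt_inv (x := 1 + c * f x * g x) (by linarith [pos x])).comp_hasFDerivAt x (du x)
  have dd := di.smul ds
  rw [dh]
  have e := dd.fderiv
  simp only [Function.comp_def] at e
  refine (congrArg norm e).trans_le ?_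
  have hF0 : 0 ≤ F := (hf0 x).trans (hfF x)
  have hG0 : 0 ≤ G := (hg0 x).trans (hgG x)
  have hp0 : 0 ≤ p := (norm_nonneg _).trans (hp x)
  have hq0 : 0 ≤ q := (norm_nonneg _).trans (hq x)
  have hP0 : 0 ≤ P := (norm_nonneg (fderiv ℝ (fderiv ℝ f) x)).trans (hP x)
  have hQ0 : 0 ≤ Q := (norm_nonneg (fderiv ℝ (fderiv ℝ g) x)).trans (hQ x)
  have nf : ‖f x‖ ≤ F := by rw [Real.norm_of_nonneg (hf0 x)]; exact hfF x
  have ng : ‖g x‖ ≤ G := by rw [Real.norm_of_nonneg (hg0 x)]; exact hgG x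
  have nc : ‖c‖ = c := Real.norm_of_nonneg hc
  have nD : ‖c • (f x • fderiv ℝ g x + g x • fderiv ℝ f x)‖ ≤ c * (F * q + G * p) := by
    rw [norm_smul, nc]
    gcongr
    refine (norm_add_le _ _).trans ?_
    rw [norm_smul, norm_smul]
    gcongr
    exacts [hq x, hp x]
  have ni : ‖(1 + c * f x * g x)⁻¹‖ ≤ 1 := by
    rw [Real.norm_of_nonneg (inv_nonneg.2 (by linarith [pos x]))]
    exact inv_le_one_of_one_le₀ (pos x)
  have ni2 : ‖-((1 + c * f x * g x) ^ 2)⁻¹‖ ≤ 1 := by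
    rw [norm_neg, Real.norm_of_nonneg (by positivity)]
    exact inv_le_one_of_one_le₀ (one_le_pow₀ (pos x))
  refine (norm_add_le _ _).trans (add_le_add ?_ ?_)
  · rw [norm_smul]
    refine (mul_le_of_le_one_left (norm_nonneg _) ni).trans ?_
    rw [norm_smul, nc]
    gcongr
    calc _ ≤ (F * Q + p * q) + (G * P + q * p) := by
          refine (norm_add_le _ _).trans (add_le_add ?_ ?_)
          · refine (norm_add_le _ _).trans ?_
            rw [norm_smul, ContinuousLinearMap.norm_smulRight_apply]
            gcongr
            exacts [hQ x, hp x, hq x]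
          · refine (norm_add_le _ _).trans ?_
            rw [norm_smul, ContinuousLinearMap.norm_smulRight_apply]
            gcongr
            exacts [hP x, hq x, hp x]
      _ = _ := by ring
  · rw [ContinuousLinearMap.norm_smulRight_apply, norm_smul]
    calc _ ≤ (1 * (c * (F * q + G * p))) * (c * (F * q + G * p)) := by gcongr
      _ = _ := by ring

/-- Explicit form of the paper's Theorem 1 (Lipschitz continuity of the cost
gradient): if the smoothed channel power `f` and the smoothed hybrid gain `g` are
nonnegative, bounded, with gradient/Hessian bounds scaling as `ε⁻¹, ε⁻²` and
`σ⁻¹, σ⁻²` respectively, then the surrogate cost `h = log (1 + c·f·g)` has Hessian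
bounded by `K·(ε⁻² + σ⁻²)` and hence a globally Lipschitz gradient with constant
`L_grad = K·(ε⁻² + σ⁻²)`, where `K = c·(F·b₂ + G·a₂ + a₁·b₁) + 2c²·(F²·b₁² + G²·a₁²)`. -/
theorem stmt_10 (n : ℕ) (hn : 1 ≤ n) (ε σ c : ℝ) (hε : 0 < ε) (hσ : 0 < σ) (hc : 0 ≤ c)
    (F G a₁ a₂ b₁ b₂ : ℝ) (hF : 0 ≤ F) (hG : 0 ≤ G) (ha₁ : 0 ≤ a₁) (ha₂ : 0 ≤ a₂)
    (hb₁ : 0 ≤ b₁) (hb₂ : 0 ≤ b₂)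
    (f g : EuclideanSpace ℝ (Fin n) → ℝ) (hf : ContDiff ℝ 2 f) (hg : ContDiff ℝ 2 g)
    (hf0 : ∀ x, 0 ≤ f x) (hfF : ∀ x, f x ≤ F)
    (hg0 : ∀ x, 0 ≤ g x) (hgG : ∀ x, g x ≤ G)
    (hfg : ∀ x, ‖gradient f x‖ ≤ a₁ / ε) (hfh : ∀ x, ‖iteratedFDeriv ℝ 2 f x‖ ≤ a₂ / ε ^ 2)
    (hgg : ∀ x, ‖gradient g x‖ ≤ b₁ / σ) (hgh : ∀ x, ‖iteratedFDeriv ℝ 2 g x‖ ≤ b₂ / σ ^ 2)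
    (K : ℝ) (hK : K = c * (F * b₂ + G * a₂ + a₁ * b₁) + 2 * c ^ 2 * (F ^ 2 * b₁ ^ 2 + G ^ 2 * a₁ ^ 2)) :
    (∀ x, ‖iteratedFDeriv ℝ 2 (fun y => Real.log (1 + c * f y * g y)) x‖ ≤
        K * (ε⁻¹ ^ 2 + σ⁻¹ ^ 2)) ∧
    (∀ x y, ‖gradient (fun z => Real.log (1 + c * f z * g z)) x -
        gradient (fun z => Real.log (1 + c * f z * g z)) y‖ ≤
        K * (ε⁻¹ ^ 2 + σ⁻¹ ^ 2) * ‖x - y‖) := by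
  have gn : ∀ (u : EuclideanSpace ℝ (Fin n) → ℝ) x, ‖gradient u x‖ = ‖fderiv ℝ u x‖ := fun u x => by
    simp [gradient]
  have key : ∀ x, ‖fderiv ℝ (fderiv ℝ (fun y => Real.log (1 + c * f y * g y))) x‖ ≤
      K * (ε⁻¹ ^ 2 + σ⁻¹ ^ 2) := fun x => by
    refine (aux_main f g c hc hf hg hf0 hg0 F G (a₁ / ε) (b₁ / σ) (a₂ / ε ^ 2) (b₂ / σ ^ 2) hfF hgG
      (fun x => gn f x ▸ hfg x) (fun x => gn g x ▸ hgg x)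
      (fun x => aux_norm f x ▸ hfh x) (fun x => aux_norm g x ▸ hgh x) x).trans ?_
    subst hK
    simp only [div_eq_mul_inv, ← inv_pow]
    have hs : 0 < ε⁻¹ := inv_pos.2 hε
    have ht : 0 < σ⁻¹ := inv_pos.2 hσ
    generalize ε⁻¹ = s at *
    generalize σ⁻¹ = t at *
    have h1 : c * (F * (b₂ * t ^ 2) + G * (a₂ * s ^ 2) + 2 * (a₁ * s * (b₁ * t))) ≤
        c * (F * b₂ + G * a₂ + a₁ * b₁) * (s ^ 2 + t ^ 2) := by
      rw [mul_assoc c (F * b₂ + G * a₂ + a₁ * b₁)]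
      gcongr
      have e1 : 0 ≤ F * b₂ * s ^ 2 := by positivity
      have e2 : 0 ≤ G * a₂ * t ^ 2 := by positivity
      have e3 : 0 ≤ a₁ * b₁ * (s - t) ^ 2 := by positivity
      linarith
    have h2 : c ^ 2 * (F * (b₁ * t) + G * (a₁ * s)) ^ 2 ≤
        2 * c ^ 2 * (F ^ 2 * b₁ ^ 2 + G ^ 2 * a₁ ^ 2) * (s ^ 2 + t ^ 2) := by
      have e1 : 0 ≤ c ^ 2 * (F * b₁ * t - G * a₁ * s) ^ 2 := by positivity
      have e2 : 0 ≤ c ^ 2 * (F * b₁ * s) ^ 2 := by positivity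
      have e3 : 0 ≤ c ^ 2 * (G * a₁ * t) ^ 2 := by positivity
      linarith
    linarith
  refine ⟨fun x => aux_norm _ x ▸ key x, fun x y => ?_⟩
  have hh : ContDiff ℝ 2 (fun y => Real.log (1 + c * f y * g y)) := by
    refine ContDiff.log (by fun_prop) fun y => ?_
    have := mul_nonneg (mul_nonneg hc (hf0 y)) (hg0 y)
    linarith
  have hd : Differentiable ℝ (fderiv ℝ (fun y => Real.log (1 + c * f y * g y))) :=
    (hh.fderiv_right (m := 1) (by norm_num)).differentiable (by norm_num)
  simp only [gradient]
  rw [← map_sub, LinearIsometryEquiv.norm_map]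
  exact convex_univ.norm_image_sub_le_of_norm_fderiv_le (𝕜 := ℝ) (fun z _ => hd z)
    (fun z _ => key z) (Set.mem_univ y) (Set.mem_univ x)
end

section
/- Let E be a nonempty complete real inner product space (Hilbert space), N ≥ 1, λ > 0, L ≥ 0 with L/λ < 1. For each i ∈ Fin N let g_i : E × (Fin N → E) → E satisfy: (i) for every fixed x : Fin N → E, the map u ↦ g_i(u, x) is λ-strongly monotone, i.e. ⟨g_i(u, x) − g_i(u', x), u − u'⟩ ≥ λ·‖u − u'‖² for all u, u' ∈ E; (ii) for every fixed u ∈ E, the map x ↦ g_i(u, x) is L-Lipschitz with respect to the sup norm ‖x‖_∞ = max_j ‖x_j‖; (iii) for every x there exists a (necessarily unique) point BR_i(x) ∈ E with g_i(BR_i(x), x) = 0. Define the best-response map T : (Fin N → E) → (Fin N → E) by (T x)_i = BR_i(x). Then T is (L/λ)-Lipschitz in the sup norm, T has a unique fixed point x*, and the iterates x^{k+1} = T(x^k) satisfy ‖x^k − x*‖_∞ ≤ (L/λ)^k · ‖x⁰ − x*‖_∞ for all k. -/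
open scoped RealInnerProductSpace

/-- Contraction and linear convergence of the distributed best-response dynamics:
if each agent's local gradient `g i` is `λ`-strongly monotone in the agent's own
variable and `L`-Lipschitz in the profile of all agents' variables (sup norm), with
`L/λ < 1`, then the best-response map `T` (sending a profile `x` to the profile of
zeros `BR i x` of `g i (·, x)`) is an `(L/λ)`-contraction in the sup norm, has a
unique fixed point `x*`, and the iterates converge linearly to it. -/
theorem stmt_18 {E : Type*} [NormedAddCommGroup E] [InnerProductSpace ℝ E]
    [CompleteSpace E] [Nonempty E] (N : ℕ) (hN : 1 ≤ N)
    (lam L : ℝ) (hlam : 0 < lam) (hL : 0 ≤ L) (hcontr : L / lam < 1)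
    (g : Fin N → E → (Fin N → E) → E)
    (hmono : ∀ (i : Fin N) (x : Fin N → E) (u u' : E),
      lam * ‖u - u'‖ ^ 2 ≤ ⟪g i u x - g i u' x, u - u'⟫)
    (hLip : ∀ (i : Fin N) (u : E) (x x' : Fin N → E),
      ‖g i u x - g i u x'‖ ≤ L * ‖x - x'‖)
    (BR : Fin N → (Fin N → E) → E)
    (hBR : ∀ (i : Fin N) (x : Fin N → E), g i (BR i x) x = 0)
    (T : (Fin N → E) → (Fin N → E)) (hT : ∀ x i, T x i = BR i x) :
    (∀ x y : Fin N → E, ‖T x - T y‖ ≤ L / lam * ‖x - y‖) ∧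
    ∃ xs : Fin N → E, T xs = xs ∧ (∀ x', T x' = x' → x' = xs) ∧
      ∀ (x₀ : Fin N → E) (k : ℕ), ‖T^[k] x₀ - xs‖ ≤ (L / lam) ^ k * ‖x₀ - xs‖ := by
  have hq : 0 ≤ L / lam := div_nonneg hL hlam.le
  have key : ∀ x y : Fin N → E, ‖T x - T y‖ ≤ L / lam * ‖x - y‖ := by
    intro x y
    rw [pi_norm_le_iff_of_nonneg (by positivity)]
    intro i
    rw [Pi.sub_apply, hT, hT]
    have h1 := hmono i x (BR i x) (BR i y)
    have h2 := hLip i (BR i y) x y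
    rw [hBR] at h1
    rw [hBR, sub_zero] at h2
    have h3 := real_inner_le_norm (0 - g i (BR i y) x) (BR i x - BR i y)
    rw [zero_sub, norm_neg] at h3
    rw [zero_sub] at h1
    have h4 : lam * ‖BR i x - BR i y‖ ≤ L * ‖x - y‖ := by
      rcases (norm_nonneg (BR i x - BR i y)).eq_or_lt with h | h
      · rw [← h, mul_zero]; positivity
      · refine le_of_mul_le_mul_right ?_ h
        have h5 := mul_le_mul_of_nonneg_right h2 h.le
        nlinarith
    rw [div_mul_eq_mul_div, le_div_iff₀ hlam]
    linarith
  have hc : ContractingWith ⟨L / lam, hq⟩ T := by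
    refine ⟨by exact_mod_cast hcontr, LipschitzWith.of_dist_le_mul fun x y => ?_⟩
    rw [dist_eq_norm, dist_eq_norm]
    exact key x y
  refine ⟨key, hc.fixedPoint T, hc.fixedPoint_isFixedPt, fun x' h => hc.fixedPoint_unique h, ?_⟩
  have hf : T (hc.fixedPoint T) = hc.fixedPoint T := hc.fixedPoint_isFixedPt
  intro x₀ k
  induction k with
  | zero => simp
  | succ k ih =>
    rw [Function.iterate_succ_apply', pow_succ', mul_assoc]
    have h := key (T^[k] x₀) (hc.fixedPoint T)
    rw [hf] at h
    exact h.trans (mul_le_mul_of_nonneg_left ih hq)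
end
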